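/- Let A be a complex unital Banach algebra, a ∈ A with g-Drazin inverse a^d, and b, c ∈ A with a^π·(bc) = 0 and a·(bc) = (bc)·a, where a^π = 1 − a·a^d. Then M = [[a,b],[c,0]] has g-Drazin inverse in M₂(A) if and only if bc has g-Drazin inverse in A. -/

import Mathlib

open Filter Finset

/-- An element of a complex (Banach) algebra is quasinilpotent if its spectral radius is zero. -/
noncomputable def Quasinilpotent {A : Type*} [Ring A] [Algebra ℂ A] (q : A) : Prop :=
  spectralRadius ℂ q = 0

/-- `a` has a generalized Drazin inverse: some `b` with `ab = ba`, `b = bab`,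
and `a - a²b` quasinilpotent. -/
noncomputable def HasGDrazin {A : Type*} [Ring A] [Algebra ℂ A] (a : A) : Prop :=
  ∃ b : A, a * b = b * a ∧ b = b * a * b ∧ Quasinilpotent (a - a ^ 2 * b)

/-
By Cline's formula, `!![a, b; c, 0] = !![1, 0; 0, c] * !![a, b; 1, 0]` may be replaced by the
companion matrix `N = !![a, w; 1, 0]` with `w = b * c`. Since a g-Drazin inverse lies in the double
commutant, both sides of the equivalence may be tested in the double centralizer `B` of `{a, w}`,
a commutative Banach algebra in which quasinilpotence and invertibility are read off characters.
If `N` has a g-Drazin inverse, so has `-det N = w`. Conversely, the spectral idempotent of `N` at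
`0` is sought in the form `P = x + y N`: it is `0` where `w` is invertible and `1` where `a` and `w`
are both quasinilpotent; where `a` is invertible and `w` is quasinilpotent, it splits off one of the
two eigenvalues of `N`, and the square root of the discriminant `a ^ 2 + 4 w` that this requires is
given by the generating series of the Catalan numbers.
-/

open scoped Topology

/-- `d` is a g-Drazin inverse of `a`. This is the property asked of the witness in `HasGDrazin a`,
with the quasinilpotent part `a - a ^ 2 * d` written as `a * (1 - a * d)`, the product of `a` and
its spectral idempotent. -/
structure IsGDrazinInverse {R : Type*} [Ring R] [Algebra ℂ R] (a d : R) : Prop where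
  commute : Commute a d
  mul_mul_self : d * a * d = d
  quasinilpotent : Quasinilpotent (a * (1 - a * d))

section Algebra

variable {R S : Type*} [Ring R] [Algebra ℂ R] [Ring S] [Algebra ℂ S]

theorem quasinilpotent_iff_spectrum_subset {q : R} : Quasinilpotent q ↔ spectrum ℂ q ⊆ {0} := by
  simp [Quasinilpotent, spectralRadius, Set.subset_def]

theorem Quasinilpotent.of_isNilpotent {q : R} (hq : IsNilpotent q) : Quasinilpotent q := by
  rw [quasinilpotent_iff_spectrum_subset]
  refine fun z hz => by_contra fun hz0 => spectrum.mem_iff.1 hz ?_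
  rw [sub_eq_add_neg]
  exact hq.neg.isUnit_add_left_of_commute ((isUnit_iff_ne_zero.2 hz0).map (algebraMap ℂ R))
    (Algebra.commutes z (-q)).symm

theorem Quasinilpotent.neg {q : R} (hq : Quasinilpotent q) : Quasinilpotent (-q) := by
  rw [quasinilpotent_iff_spectrum_subset] at hq ⊢
  rw [← spectrum.neg_eq, Set.neg_subset, Set.neg_singleton, neg_zero]
  exact hq

theorem Quasinilpotent.map (φ : R →ₐ[ℂ] S) {q : R} (hq : Quasinilpotent q) :
    Quasinilpotent (φ q) := by
  rw [quasinilpotent_iff_spectrum_subset] at hq ⊢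
  exact (AlgHom.spectrum_apply_subset φ q).trans hq

theorem Quasinilpotent.of_map (φ : R →ₐ[ℂ] S) [IsLocalHom φ] {q : R}
    (hq : Quasinilpotent (φ q)) : Quasinilpotent q := by
  rw [quasinilpotent_iff_spectrum_subset] at hq ⊢
  refine fun z hz => hq fun hunit => hz ?_
  exact IsUnit.of_map φ _ (by rw [map_sub, AlgHom.commutes]; exact hunit)

theorem quasinilpotent_mul_comm {x y : R} : Quasinilpotent (x * y) ↔ Quasinilpotent (y * x) := by
  simp only [quasinilpotent_iff_spectrum_subset, ← Set.sdiff_eq_empty]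
  rw [spectrum.nonzero_mul_comm]

theorem hasGDrazin_iff_exists_isGDrazinInverse {a : R} :
    HasGDrazin a ↔ ∃ d, IsGDrazinInverse a d := by
  have hq (d : R) : a - a ^ 2 * d = a * (1 - a * d) := by noncomm_ring
  constructor
  · rintro ⟨d, hcomm, hd, hquasi⟩
    exact ⟨d, hcomm, hd.symm, hq d ▸ hquasi⟩
  · rintro ⟨d, hd⟩
    exact ⟨d, hd.commute, hd.mul_mul_self.symm, hq d ▸ hd.quasinilpotent⟩

theorem IsGDrazinInverse.hasGDrazin {a d : R} (hd : IsGDrazinInverse a d) : HasGDrazin a :=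
  hasGDrazin_iff_exists_isGDrazinInverse.2 ⟨d, hd⟩

theorem HasGDrazin.exists_isGDrazinInverse {a : R} (ha : HasGDrazin a) :
    ∃ d, IsGDrazinInverse a d :=
  hasGDrazin_iff_exists_isGDrazinInverse.1 ha

theorem IsGDrazinInverse.isIdempotentElem_mul {a d : R} (hd : IsGDrazinInverse a d) :
    IsIdempotentElem (a * d) := by
  rw [IsIdempotentElem, mul_assoc, ← mul_assoc d, hd.mul_mul_self]

theorem IsGDrazinInverse.neg {a d : R} (hd : IsGDrazinInverse a d) :
    IsGDrazinInverse (-a) (-d) where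
  commute := hd.commute.neg_left.neg_right
  mul_mul_self := by simpa using hd.mul_mul_self
  quasinilpotent := by simpa using hd.quasinilpotent.neg

theorem IsGDrazinInverse.map (φ : R →ₐ[ℂ] S) {a d : R} (hd : IsGDrazinInverse a d) :
    IsGDrazinInverse (φ a) (φ d) where
  commute := hd.commute.map φ
  mul_mul_self := by rw [← map_mul, ← map_mul, hd.mul_mul_self]
  quasinilpotent := by simpa using hd.quasinilpotent.map φ

theorem IsGDrazinInverse.of_map (φ : R →ₐ[ℂ] S) [IsLocalHom φ] (hφ : Function.Injective φ)
    {a d : R} (hd : IsGDrazinInverse (φ a) (φ d)) : IsGDrazinInverse a d where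
  commute := hφ <| by simpa only [map_mul] using hd.commute.eq
  mul_mul_self := hφ <| by simpa only [map_mul] using hd.mul_mul_self
  quasinilpotent := .of_map φ <| by simpa using hd.quasinilpotent

theorem HasGDrazin.map (φ : R →ₐ[ℂ] S) {a : R} (ha : HasGDrazin a) : HasGDrazin (φ a) :=
  have ⟨_, hd⟩ := ha.exists_isGDrazinInverse
  (hd.map φ).hasGDrazin

theorem IsGDrazinInverse.cline {x y d : R} (hd : IsGDrazinInverse (x * y) d) :
    IsGDrazinInverse (y * x) (y * d ^ 2 * x) := by
  have hxyd : x * y * d ^ 2 = d := by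
    rw [pow_two, ← mul_assoc, hd.commute.eq, hd.mul_mul_self]
  have hdxy : d ^ 2 * (x * y) = d := by
    rw [pow_two, mul_assoc, ← hd.commute.eq, ← mul_assoc, hd.mul_mul_self]
  have hleft : y * x * (y * d ^ 2 * x) = y * d * x := by
    calc y * x * (y * d ^ 2 * x) = y * (x * y * d ^ 2) * x := by noncomm_ring
      _ = y * d * x := by rw [hxyd]
  have hright : y * d ^ 2 * x * (y * x) = y * d * x := by
    calc y * d ^ 2 * x * (y * x) = y * (d ^ 2 * (x * y)) * x := by noncomm_ring
      _ = y * d * x := by rw [hdxy]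
  refine ⟨hleft.trans hright.symm, ?_, ?_⟩
  · calc y * d ^ 2 * x * (y * x) * (y * d ^ 2 * x)
        = y * d * (x * y * d ^ 2) * x := by rw [hright]; noncomm_ring
      _ = y * d ^ 2 * x := by rw [hxyd]; noncomm_ring
  · have hquasi : y * x * (1 - y * x * (y * d ^ 2 * x)) = y * ((1 - x * y * d) * x) := by
      rw [hleft]; noncomm_ring
    rw [hquasi, quasinilpotent_mul_comm, mul_assoc, quasinilpotent_mul_comm]
    exact hd.quasinilpotent

theorem hasGDrazin_mul_comm {x y : R} : HasGDrazin (x * y) ↔ HasGDrazin (y * x) := by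
  simp only [hasGDrazin_iff_exists_isGDrazinInverse]
  exact ⟨fun ⟨_, hd⟩ => ⟨_, hd.cline⟩, fun ⟨_, hd⟩ => ⟨_, hd.cline⟩⟩

theorem hasGDrazin_of_isIdempotentElem {u p : R} (hp : IsIdempotentElem p) (hup : Commute u p)
    (hquasi : Quasinilpotent (u * p)) (hunit : IsUnit (u + p)) : HasGDrazin u := by
  obtain ⟨s, hs⟩ := hunit
  have hus : Commute u ↑s⁻¹ :=
    Commute.units_inv_right (hs ▸ (Commute.refl u).add_right hup)
  have hmul : u * (↑s⁻¹ * (1 - p)) = 1 - p := by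
    have hsu : ↑s * (1 - p) = u * (1 - p) := by
      rw [hs, add_mul, hp.mul_one_sub_self, add_zero]
    rw [← mul_assoc, hus.eq, mul_assoc, ← hsu, s.inv_mul_cancel_left]
  refine IsGDrazinInverse.hasGDrazin (d := ↑s⁻¹ * (1 - p)) ⟨?_, ?_, ?_⟩
  · exact hus.mul_right ((Commute.one_right u).sub_right hup)
  · rw [mul_assoc, hmul, mul_assoc, hp.one_sub.eq]
  · rwa [hmul, sub_sub_cancel]

end Algebra

section BanachAlgebra

variable {A : Type*} [NormedRing A] [NormedAlgebra ℂ A] [CompleteSpace A]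

theorem Quasinilpotent.eventually_norm_pow_le {q : A} (hq : Quasinilpotent q) {ε : ℝ}
    (hε : 0 < ε) : ∀ᶠ n : ℕ in atTop, ‖q ^ n‖ ≤ ε ^ n := by
  have hlim := spectrum.pow_norm_pow_one_div_tendsto_nhds_spectralRadius q
  rw [show spectralRadius ℂ q = 0 from hq] at hlim
  filter_upwards [hlim.eventually (gt_mem_nhds (ENNReal.ofReal_pos.2 hε)),
    eventually_ne_atTop 0] with n hn hn0
  have hroot : ‖q ^ n‖ ^ (1 / n : ℝ) < ε := (ENNReal.ofReal_lt_ofReal_iff hε).1 hn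
  calc ‖q ^ n‖ = (‖q ^ n‖ ^ (1 / n : ℝ)) ^ n := by
        rw [one_div, Real.rpow_inv_natCast_pow (norm_nonneg _) hn0]
    _ ≤ ε ^ n := by gcongr

theorem Quasinilpotent.summable_pow_mul_norm_pow {q : A} (hq : Quasinilpotent q) {r : ℝ}
    (hr : 0 ≤ r) : Summable fun n : ℕ => r ^ n * ‖q ^ n‖ := by
  have hε : r * (2 * (r + 1))⁻¹ ≤ 2⁻¹ := by
    rw [mul_inv_le_iff₀ (by positivity)]
    linarith
  refine Summable.of_norm_bounded_eventually_nat
    (summable_geometric_of_lt_one (r := (2⁻¹ : ℝ)) (by norm_num) (by norm_num)) ?_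
  filter_upwards [hq.eventually_norm_pow_le (ε := (2 * (r + 1))⁻¹) (by positivity)] with n hn
  rw [Real.norm_of_nonneg (by positivity)]
  calc r ^ n * ‖q ^ n‖ ≤ r ^ n * (2 * (r + 1))⁻¹ ^ n := by gcongr
    _ = (r * (2 * (r + 1))⁻¹) ^ n := (mul_pow _ _ _).symm
    _ ≤ 2⁻¹ ^ n := by gcongr

theorem Quasinilpotent.tendsto_norm_pow_mul_norm_pow {q : A} (hq : Quasinilpotent q) (x : A) :
    Tendsto (fun n : ℕ => ‖x ^ n‖ * ‖q ^ n‖) atTop (𝓝 0) := by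
  refine squeeze_zero' (.of_forall fun n => by positivity) ?_
    (hq.summable_pow_mul_norm_pow (norm_nonneg x)).tendsto_atTop_zero
  filter_upwards [eventually_gt_atTop 0] with n hn
  gcongr
  exact norm_pow_le' x hn

theorem eq_zero_of_eq_mul_mul {R : Type*} [NormedRing R] {x y z : R}
    (hlim : Tendsto (fun n : ℕ => ‖x ^ n‖ * ‖y ^ n‖) atTop (𝓝 0)) (hz : z = x * z * y) :
    z = 0 := by
  have hpow (n : ℕ) : z = x ^ n * z * y ^ n := by
    induction n with
    | zero => simp
    | succ n ih =>
      calc z = x ^ n * (x * z * y) * y ^ n := by rw [← hz, ← ih]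
        _ = x ^ (n + 1) * z * y ^ (n + 1) := by rw [pow_succ, pow_succ']; noncomm_ring
  have hbound (n : ℕ) : ‖z‖ ≤ ‖z‖ * (‖x ^ n‖ * ‖y ^ n‖) :=
    calc ‖z‖ = ‖x ^ n * z * y ^ n‖ := by rw [← hpow n]
      _ ≤ ‖x ^ n‖ * ‖z‖ * ‖y ^ n‖ := norm_mul₃_le
      _ = ‖z‖ * (‖x ^ n‖ * ‖y ^ n‖) := by ring
  have hzero := hlim.const_mul ‖z‖
  rw [mul_zero] at hzero
  exact norm_le_zero_iff.1 (ge_of_tendsto' hzero hbound)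

theorem IsGDrazinInverse.commute_mul_of_commute {a d y : A} (hd : IsGDrazinInverse a d)
    (hy : Commute y a) : Commute y (a * d) := by
  have hda : d * a = a * d := hd.commute.eq.symm
  have hp : (1 - a * d) * (1 - a * d) = 1 - a * d := hd.isIdempotentElem_mul.one_sub
  have hap : a * (1 - a * d) = (1 - a * d) * a :=
    ((Commute.one_right a).sub_right ((Commute.refl a).mul_right hd.commute)).eq
  have hleft : a * d * y * (1 - a * d) = 0 := by
    refine eq_zero_of_eq_mul_mul (hd.quasinilpotent.tendsto_norm_pow_mul_norm_pow d) ?_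
    symm
    calc d * (a * d * y * (1 - a * d)) * (a * (1 - a * d))
        = d * a * d * y * ((1 - a * d) * (1 - a * d)) * a := by rw [hap]; noncomm_ring
      _ = d * (y * a) * (1 - a * d) := by
          rw [hd.mul_mul_self, hp, mul_assoc, ← hap]; noncomm_ring
      _ = a * d * y * (1 - a * d) := by rw [hy.eq, ← mul_assoc, hda]
  have hright : (1 - a * d) * y * (a * d) = 0 := by
    refine eq_zero_of_eq_mul_mul (x := a * (1 - a * d)) (y := d) ?_ ?_
    · simpa only [mul_comm] using hd.quasinilpotent.tendsto_norm_pow_mul_norm_pow d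
    symm
    calc a * (1 - a * d) * ((1 - a * d) * y * (a * d)) * d
        = a * ((1 - a * d) * (1 - a * d)) * y * (a * d * d) := by noncomm_ring
      _ = (1 - a * d) * (a * y) * d := by rw [hp, hap, ← hda, hd.mul_mul_self]; noncomm_ring
      _ = (1 - a * d) * y * (a * d) := by rw [← hy.eq]; noncomm_ring
  rw [mul_sub, mul_one, sub_eq_zero] at hleft
  rw [sub_mul, one_mul, sub_mul, sub_eq_zero] at hright
  exact hright.trans hleft.symm

theorem IsGDrazinInverse.commute_of_commute {a d y : A} (hd : IsGDrazinInverse a d)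
    (hy : Commute y a) : Commute y d := by
  have he : Commute y (a * d) := hd.commute_mul_of_commute hy
  have hda : d * a = a * d := hd.commute.eq.symm
  calc y * d = y * (a * d) * d := by rw [← hda, mul_assoc, hd.mul_mul_self]
    _ = d * (a * y) * d := by rw [he.eq, ← hda, mul_assoc d]
    _ = d * (y * (a * d)) := by rw [← hy.eq, mul_assoc, mul_assoc]
    _ = d * y := by rw [he.eq, ← mul_assoc, ← mul_assoc, hd.mul_mul_self]

theorem IsGDrazinInverse.mul_eq_one_of_isUnit {a d : A} (hd : IsGDrazinInverse a d)
    (ha : IsUnit a) : a * d = 1 := by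
  obtain ⟨u, rfl⟩ := ha
  have hcomm : Commute (u : A) (1 - u * d) :=
    (Commute.one_right _).sub_right ((Commute.refl _).mul_right hd.commute)
  refine (sub_eq_zero.1 ?_).symm
  refine eq_zero_of_eq_mul_mul (hd.quasinilpotent.tendsto_norm_pow_mul_norm_pow ↑u⁻¹) ?_
  rw [hcomm.eq, mul_assoc, ← mul_assoc (1 - u * d), hd.isIdempotentElem_mul.one_sub.eq,
    ← hcomm.eq, u.inv_mul_cancel_left]

theorem Quasinilpotent.summable_norm_catalan_mul_pow {s : A} (hs : Quasinilpotent s) :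
    Summable fun n : ℕ => ‖(catalan n : A) * s ^ n‖ := by
  refine Summable.of_nonneg_of_le (fun n => norm_nonneg _) (fun n => ?_)
    (hs.summable_pow_mul_norm_pow (r := 4) (by norm_num))
  have hle : catalan n ≤ 4 ^ n := by
    rw [catalan_eq_centralBinom_div]
    exact (Nat.div_le_self _ _).trans (Nat.centralBinom_le_four_pow n)
  calc ‖(catalan n : A) * s ^ n‖ ≤ (catalan n : ℝ) * ‖s ^ n‖ := by
        rw [← nsmul_eq_mul]; exact norm_nsmul_le
    _ ≤ 4 ^ n * ‖s ^ n‖ := by gcongr; exact_mod_cast hle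

theorem sum_antidiagonal_catalan_mul_pow {R : Type*} [Semiring R] (s : R) (n : ℕ) :
    ∑ p ∈ antidiagonal n, (catalan p.1 : R) * s ^ p.1 * ((catalan p.2 : R) * s ^ p.2) =
      (catalan (n + 1) : R) * s ^ n := by
  rw [catalan_succ', Nat.cast_sum, sum_mul]
  refine sum_congr rfl fun p hp => ?_
  rw [← mem_antidiagonal.1 hp, Nat.cast_mul, pow_add, mul_assoc, ← mul_assoc (s ^ p.1),
    (Nat.commute_cast (s ^ p.1) _).eq]
  simp only [mul_assoc]

theorem Quasinilpotent.exists_eq_one_add_mul_sq {s : A} (hs : Quasinilpotent s) :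
    ∃ c : A, c = 1 + s * c ^ 2 := by
  have hsum := hs.summable_norm_catalan_mul_pow
  have hshift : Summable fun n : ℕ => (catalan (n + 1) : A) * s ^ n :=
    (summable_norm_sum_mul_antidiagonal_of_summable_norm hsum hsum).of_norm.congr
      (sum_antidiagonal_catalan_mul_pow s)
  refine ⟨∑' n : ℕ, (catalan n : A) * s ^ n, ?_⟩
  have hsq : (∑' n : ℕ, (catalan n : A) * s ^ n) ^ 2 =
      ∑' n : ℕ, (catalan (n + 1) : A) * s ^ n := by
    rw [pow_two, tsum_mul_tsum_eq_tsum_sum_antidiagonal_of_summable_norm hsum hsum]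
    exact tsum_congr (sum_antidiagonal_catalan_mul_pow s)
  rw [hsq, hsum.of_norm.tsum_eq_zero_add, ← hshift.tsum_mul_left]
  simp only [catalan_zero, Nat.cast_one, pow_zero, mul_one]
  congr 1
  refine tsum_congr fun n => ?_
  rw [pow_succ', ← mul_assoc, ← mul_assoc, (Nat.commute_cast s _).eq]

end BanachAlgebra

section Matrix

attribute [local instance] Matrix.linftyOpNormedRing Matrix.linftyOpNormedAlgebra

variable {n S : Type*} [Fintype n] [DecidableEq n] [NormedRing S] [CompleteSpace S]

-- The uniformity of the operator norm is the product one only up to unfolding, so instance search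
-- does not find this.
theorem completeSpace_matrix :
    @CompleteSpace (Matrix n n S) PseudoMetricSpace.toUniformSpace :=
  inferInstanceAs (CompleteSpace (n → n → S))

theorem IsGDrazinInverse.matrix_mul_eq_one_of_isUnit [NormedAlgebra ℂ S] {N D : Matrix n n S}
    (hD : IsGDrazinInverse N D) (hN : IsUnit N) : N * D = 1 :=
  have := completeSpace_matrix (n := n) (S := S)
  IsGDrazinInverse.mul_eq_one_of_isUnit (A := Matrix n n S) hD hN

end Matrix

section Commutative

variable {B : Type*} [NormedCommRing B] [NormedAlgebra ℂ B] [CompleteSpace B]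
  {n : Type*} [Fintype n] [DecidableEq n]

theorem isUnit_iff_forall_algHom {u : B} : IsUnit u ↔ ∀ χ : B →ₐ[ℂ] ℂ, χ u ≠ 0 := by
  refine ⟨fun hu χ => (hu.map χ).ne_zero, fun h => ?_⟩
  by_contra hu
  obtain ⟨f, hf⟩ := WeakDual.CharacterSpace.exists_apply_eq_zero hu
  exact h (WeakDual.CharacterSpace.toAlgHom f) hf

theorem isUnit_matrix_iff_forall_algHom {X : Matrix n n B} :
    IsUnit X ↔ ∀ χ : B →ₐ[ℂ] ℂ, IsUnit (χ.mapMatrix X) := by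
  simp only [Matrix.isUnit_iff_isUnit_det, ← AlgHom.map_det, isUnit_iff_ne_zero,
    isUnit_iff_forall_algHom]

theorem quasinilpotent_iff_forall_algHom {q : B} :
    Quasinilpotent q ↔ ∀ χ : B →ₐ[ℂ] ℂ, χ q = 0 := by
  rw [quasinilpotent_iff_spectrum_subset]
  refine ⟨fun h χ => h (AlgHom.apply_mem_spectrum χ q), fun h z hz => ?_⟩
  obtain ⟨f, rfl⟩ := WeakDual.CharacterSpace.mem_spectrum_iff_exists.1 hz
  exact h (WeakDual.CharacterSpace.toAlgHom f)

theorem Quasinilpotent.matrix_of_forall_algHom {X : Matrix n n B}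
    (hX : ∀ χ : B →ₐ[ℂ] ℂ, Quasinilpotent (χ.mapMatrix X)) : Quasinilpotent X := by
  rw [quasinilpotent_iff_spectrum_subset]
  refine fun z hz => by_contra fun hz0 => hz (isUnit_matrix_iff_forall_algHom.2 fun χ => ?_)
  rw [map_sub, AlgHom.commutes]
  exact spectrum.notMem_iff.1 fun hz' => hz0 (quasinilpotent_iff_spectrum_subset.1 (hX χ) hz')

theorem IsGDrazinInverse.det {N D : Matrix n n B} (hD : IsGDrazinInverse N D) :
    IsGDrazinInverse N.det D.det where
  commute := Commute.all _ _
  mul_mul_self := by rw [← Matrix.det_mul, ← Matrix.det_mul, hD.mul_mul_self]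
  quasinilpotent := by
    refine quasinilpotent_iff_forall_algHom.2 fun χ => ?_
    rw [← Matrix.det_mul, map_mul, map_sub, map_one, AlgHom.map_det, AlgHom.map_det, map_mul]
    by_cases hN : IsUnit (χ.mapMatrix N)
    · rw [(hD.map χ.mapMatrix).matrix_mul_eq_one_of_isUnit hN, Matrix.det_one, sub_self, mul_zero]
    · rw [Matrix.isUnit_iff_isUnit_det, isUnit_iff_ne_zero, not_not] at hN
      rw [hN, zero_mul]

theorem Quasinilpotent.exists_sq_mul_eq_one {s : B} (hs : Quasinilpotent s) :
    ∃ r : B, r ^ 2 * (1 - 4 * s) = 1 ∧ ∀ χ : B →ₐ[ℂ] ℂ, χ r = 1 := by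
  obtain ⟨c, hc⟩ := hs.exists_eq_one_add_mul_sq
  rw [quasinilpotent_iff_forall_algHom] at hs
  have hsqrt : (1 - 2 * s * c) ^ 2 = 1 - 4 * s := by linear_combination (-4 * s) * hc
  have hχ (χ : B →ₐ[ℂ] ℂ) : χ (1 - 2 * s * c) = 1 := by simp [hs χ]
  obtain ⟨r, hr⟩ := (isUnit_iff_forall_algHom.2 fun χ => by simp [hχ χ] :
    IsUnit (1 - 2 * s * c)).exists_left_inv
  refine ⟨r, by rw [← hsqrt, ← mul_pow, hr, one_pow], fun χ => ?_⟩
  simpa [hs χ] using congrArg χ hr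

-- The matrix is `x + y N`, where `N = !![a, w; 1, 0]` satisfies `N ^ 2 = a N + w`.
theorem isIdempotentElem_companion {R : Type*} [CommRing R] {a w x y : R}
    (hx : x ^ 2 + y ^ 2 * w = x) (hy : 2 * x * y + y ^ 2 * a = y) :
    IsIdempotentElem !![x + y * a, y * w; y, x] := by
  rw [IsIdempotentElem, Matrix.mul_fin_two]
  congr 1
  simp only [Matrix.vecCons_inj, and_true]
  refine ⟨⟨?_, ?_⟩, ?_, ?_⟩
  · linear_combination hx + a * hy
  · linear_combination w * hy
  · linear_combination hy
  · linear_combination hx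

-- Where `a` is invertible and `w` is quasinilpotent, the eigenvalues of `N = !![a, w; 1, 0]` are
-- `a (1 ± ρ) / 2` with `ρ ^ 2 = 1 + 4 a⁻² w`, and the projection onto the quasinilpotent one is
-- `(1 + r) / 2 - a⁻¹ r N` with `r = ρ⁻¹`. Here `g` cuts down to this corner, `k` to the one where
-- the projection is `1`, and `h` is one half.
theorem companion_idempotent_equations {R : Type*} [CommRing R] {a d g h k r w : R}
    (hd : d * a * d = d) (hg : g * g = g) (hk : k * k = k) (hkg : k * g = 0) (hh : 2 * h = 1)
    (hr : g * r ^ 2 * (1 + 4 * d ^ 2 * w) = g) :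
    (k + h * g * (1 + r)) ^ 2 + (-(g * d * r)) ^ 2 * w = k + h * g * (1 + r) ∧
      2 * (k + h * g * (1 + r)) * -(g * d * r) + (-(g * d * r)) ^ 2 * a = -(g * d * r) := by
  constructor
  · linear_combination hk + 2 * h * (1 + r) * hkg + (h ^ 2 * (1 + r) ^ 2 + d ^ 2 * r ^ 2 * w) * hg
      + h ^ 2 * hr + (g * (1 + r) * h - g * d ^ 2 * r ^ 2 * w * (1 + 2 * h)) * hh
  · linear_combination -2 * d * r * hkg + (d ^ 2 * r ^ 2 * a - 2 * h * (1 + r) * d * r) * hg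
      + g * r ^ 2 * hd - g * d * r * (1 + r) * hh

theorem IsGDrazinInverse.exists_companion_idempotent_coeffs {a d w v : B}
    (hd : IsGDrazinInverse a d) (hv : IsGDrazinInverse w v) :
    ∃ x y : B, x ^ 2 + y ^ 2 * w = x ∧ 2 * x * y + y ^ 2 * a = y ∧ ∀ χ : B →ₐ[ℂ] ℂ,
      (χ x = 0 ∧ χ y = 0 ∧ χ w ≠ 0) ∨ (χ x = 1 ∧ χ y = 0 ∧ χ a = 0 ∧ χ w = 0) ∨
        (χ x = 1 ∧ χ y * χ a = -1 ∧ χ w = 0) := by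
  have he := hd.isIdempotentElem_mul.eq
  have hf := hv.isIdempotentElem_mul.one_sub.eq
  have hwf := quasinilpotent_iff_forall_algHom.1 hv.quasinilpotent
  obtain ⟨r, hr, hrχ⟩ := Quasinilpotent.exists_sq_mul_eq_one (s := -(d ^ 2 * (w * (1 - w * v))))
    (quasinilpotent_iff_forall_algHom.2 fun χ => by rw [map_neg, map_mul, hwf, mul_zero, neg_zero])
  have hh : 2 * algebraMap ℂ B 2⁻¹ = 1 := by
    rw [← map_ofNat (algebraMap ℂ B) 2, ← map_mul]; norm_num
  set g := a * d * (1 - w * v) with hg_def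
  set k := (1 - a * d) * (1 - w * v) with hk_def
  have hg : g * g = g := by linear_combination a * d * (a * d) * hf + (1 - w * v) * he
  have hk : k * k = k := by linear_combination (1 - a * d) ^ 2 * hf + (1 - w * v) * he
  have hkg : k * g = 0 := by linear_combination -(1 - w * v) ^ 2 * he
  have hgr : g * r ^ 2 * (1 + 4 * d ^ 2 * w) = g := by
    linear_combination g * hr - 4 * r ^ 2 * d ^ 2 * w * a * d * hf
  obtain ⟨hx, hy⟩ := companion_idempotent_equations hd.mul_mul_self hg hk hkg hh hgr
  refine ⟨_, _, hx, hy, fun χ => ?_⟩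
  by_cases hw : χ w = 0
  · by_cases ha : χ a = 0
    · have hdχ : χ d = 0 := by simpa [ha] using (congrArg χ hd.mul_mul_self).symm
      exact .inr (.inl (by simp [hg_def, hk_def, ha, hw, hdχ]))
    · have hadχ := (hd.map χ).mul_eq_one_of_isUnit (isUnit_iff_ne_zero.2 ha)
      have hdaχ : χ d * χ a = 1 := by rw [mul_comm, hadχ]
      exact .inr (.inr (by norm_num [hg_def, hk_def, hadχ, hdaχ, hw, hrχ]))
  · have hwvχ := (hv.map χ).mul_eq_one_of_isUnit (isUnit_iff_ne_zero.2 hw)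
    exact .inl (by simp [hg_def, hk_def, hwvχ, hw])

theorem isNilpotent_strictly_lower_fin_two {R : Type*} [Semiring R] (t : R) :
    IsNilpotent !![0, 0; t, 0] :=
  ⟨2, by ext i j; fin_cases i <;> fin_cases j <;> simp [pow_two]⟩

theorem hasGDrazin_companion_of_comm {a w : B} (ha : HasGDrazin a) (hw : HasGDrazin w) :
    HasGDrazin !![a, w; 1, 0] := by
  obtain ⟨d, hd⟩ := ha.exists_isGDrazinInverse
  obtain ⟨v, hv⟩ := hw.exists_isGDrazinInverse
  obtain ⟨x, y, hx, hy, hχ⟩ := hd.exists_companion_idempotent_coeffs hv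
  have hmul : !![a, w; 1, 0] * !![x + y * a, y * w; y, x] =
      !![a * (x + y * a) + w * y, a * (y * w) + w * x; x + y * a, y * w] := by
    simp
  refine hasGDrazin_of_isIdempotentElem (isIdempotentElem_companion hx hy) ?_ ?_ ?_
  · rw [Commute, SemiconjBy, Matrix.mul_fin_two, Matrix.mul_fin_two]
    congr! 3 <;> ring_nf
  · refine Quasinilpotent.matrix_of_forall_algHom fun χ => Quasinilpotent.of_isNilpotent ?_
    have hmap : χ.mapMatrix (!![a, w; 1, 0] * !![x + y * a, y * w; y, x]) =
        !![0, 0; χ (x + y * a), 0] := by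
      rw [hmul]
      ext i j
      rcases hχ χ with ⟨hx0, hy0, -⟩ | ⟨-, hy0, ha0, hw0⟩ | ⟨hx1, hya, hw0⟩ <;>
        fin_cases i <;> fin_cases j <;> simp [*]
    rw [hmap]
    exact isNilpotent_strictly_lower_fin_two _
  · refine isUnit_matrix_iff_forall_algHom.2 fun χ => ?_
    rw [Matrix.isUnit_iff_isUnit_det, isUnit_iff_ne_zero, ← AlgHom.map_det, Matrix.det_fin_two]
    rcases hχ χ with ⟨hx0, hy0, hw0⟩ | ⟨hx1, hy0, ha0, hw0⟩ | ⟨hx1, hya, hw0⟩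
    · simp [hx0, hy0, hw0]
    · simp [hx1, hy0, ha0, hw0]
    · have ha0 : χ a ≠ 0 := fun ha0 => by simp [ha0] at hya
      simp [hx1, hya, hw0, ha0]

theorem HasGDrazin.of_companion_of_comm {a w : B} (h : HasGDrazin !![a, w; 1, 0]) :
    HasGDrazin w := by
  obtain ⟨D, hD⟩ := h.exists_isGDrazinInverse
  simpa [Matrix.det_fin_two_of] using hD.det.neg.hasGDrazin

end Commutative

theorem isLocalHom_of_range_eq_centralizer {R S : Type*} [Monoid R] [Monoid S] (φ : R →* S)
    (hφ : Function.Injective φ) {T : Set S} (hT : Set.range φ = T.centralizer) :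
    IsLocalHom φ := by
  refine ⟨fun r ⟨u, hu⟩ => ?_⟩
  have hr : (u : S) ∈ T.centralizer := by rw [hu, ← hT]; exact ⟨r, rfl⟩
  obtain ⟨s, hs⟩ : ↑u⁻¹ ∈ Set.range φ := by
    rw [hT]
    exact fun t ht => Commute.units_inv_right (hr t ht)
  refine isUnit_iff_exists.2 ⟨s, hφ ?_, hφ ?_⟩
  · rw [map_mul, ← hu, hs, u.mul_inv, map_one]
  · rw [map_mul, ← hu, hs, u.inv_mul, map_one]

theorem range_mapMatrix_eq_centralizer {R S : Type*} {n : Type*} [Fintype n] [DecidableEq n]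
    [Semiring R] [Semiring S] (φ : R →+* S) {T : Set S} (hT : Set.range φ = T.centralizer) :
    Set.range φ.mapMatrix = (Matrix.scalar n '' T).centralizer := by
  ext Z
  have hentries (t : S) : Matrix.scalar n t * Z = Z * Matrix.scalar n t ↔
      ∀ i j, t * Z i j = Z i j * t := by
    simp [← Matrix.ext_iff]
  simp only [Set.mem_centralizer_iff, Set.forall_mem_image, hentries]
  have hmem (z : S) : z ∈ Set.range φ ↔ ∀ t ∈ T, t * z = z * t := by
    rw [hT, Set.mem_centralizer_iff]
  refine ⟨?_, fun hZ => ?_⟩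
  · rintro ⟨X, rfl⟩ t ht i j
    exact (hmem _).1 (Set.mem_range_self (X i j)) t ht
  · choose X hX using fun i j => (hmem (Z i j)).2 fun t ht => hZ ht i j
    exact ⟨Matrix.of X, Matrix.ext hX⟩

section Transfer

variable {R S : Type*} [Ring R] [Algebra ℂ R] [NormedRing S] [NormedAlgebra ℂ S] [CompleteSpace S]

theorem hasGDrazin_map_iff (φ : R →ₐ[ℂ] S) (hφ : Function.Injective φ) {T : Set S}
    (hT : Set.range φ = T.centralizer) {u : R} : HasGDrazin (φ u) ↔ HasGDrazin u := by
  refine ⟨fun hu => ?_, HasGDrazin.map φ⟩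
  have : IsLocalHom φ := ⟨(isLocalHom_of_range_eq_centralizer (φ : R →* S) hφ hT).map_nonunit⟩
  have huT : φ u ∈ T.centralizer := hT ▸ Set.mem_range_self u
  obtain ⟨d, hd⟩ := hu.exists_isGDrazinInverse
  obtain ⟨d, rfl⟩ : d ∈ Set.range φ := by
    rw [hT]
    exact fun t ht => hd.commute_of_commute (huT t ht)
  exact (hd.of_map φ hφ).hasGDrazin

attribute [local instance] Matrix.linftyOpNormedRing Matrix.linftyOpNormedAlgebra

theorem hasGDrazin_mapMatrix_iff (φ : R →ₐ[ℂ] S) (hφ : Function.Injective φ) {T : Set S}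
    (hT : Set.range φ = T.centralizer) {n : Type*} [Fintype n] [DecidableEq n]
    {N : Matrix n n R} :
    HasGDrazin (φ.mapMatrix N) ↔ HasGDrazin N :=
  have := completeSpace_matrix (n := n) (S := S)
  hasGDrazin_map_iff (S := Matrix n n S) φ.mapMatrix (Matrix.map_injective hφ)
    (range_mapMatrix_eq_centralizer (φ : R →+* S) hT)

end Transfer

theorem hasGDrazin_companion_map_iff {A B : Type*} [NormedRing A] [NormedAlgebra ℂ A]
    [CompleteSpace A] [NormedCommRing B] [NormedAlgebra ℂ B] [CompleteSpace B] (φ : B →ₐ[ℂ] A)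
    (hφ : Function.Injective φ) {T : Set A} (hT : Set.range φ = T.centralizer) {a w : B}
    (ha : HasGDrazin (φ a)) :
    HasGDrazin !![φ a, φ w; 1, 0] ↔ HasGDrazin (φ w) := by
  have hmap : !![φ a, φ w; 1, 0] = φ.mapMatrix !![a, w; 1, 0] := by
    ext i j
    fin_cases i <;> fin_cases j <;> simp
  rw [hmap, hasGDrazin_mapMatrix_iff φ hφ hT, hasGDrazin_map_iff φ hφ hT]
  exact ⟨HasGDrazin.of_companion_of_comm,
    hasGDrazin_companion_of_comm ((hasGDrazin_map_iff φ hφ hT).1 ha)⟩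

theorem hasGDrazin_companion_iff {A : Type*} [NormedRing A] [NormedAlgebra ℂ A] [CompleteSpace A]
    {a w : A} (haw : Commute a w) (ha : HasGDrazin a) :
    HasGDrazin !![a, w; 1, 0] ↔ HasGDrazin w := by
  let T : Set A := Set.centralizer {a, w}
  let B : Subalgebra ℂ A := Subalgebra.centralizer ℂ T
  have hpair : ∀ x ∈ ({a, w} : Set A), ∀ y ∈ ({a, w} : Set A), x * y = y * x := by
    rintro x (rfl | rfl) y (rfl | rfl)
    exacts [rfl, haw.eq, haw.eq.symm, rfl]
  let : NormedCommRing B :=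
    { (inferInstance : NormedRing B) with
      mul_comm := fun x y =>
        Subtype.ext (Set.centralizer_centralizer_comm_of_comm hpair x x.2 y y.2) }
  have : CompleteSpace B := (Set.isClosed_centralizer T).completeSpace_coe
  have hsub : ({a, w} : Set A) ⊆ B := Set.subset_centralizer_centralizer
  exact hasGDrazin_companion_map_iff B.val Subtype.val_injective (T := T) Subtype.range_coe
    (a := ⟨a, hsub (by simp)⟩) (w := ⟨w, hsub (by simp)⟩) ha

theorem hasGDrazin_fin_two_iff_companion {R : Type*} [Ring R] [Algebra ℂ R] (a b c : R) :
    HasGDrazin !![a, b; c, 0] ↔ HasGDrazin !![a, b * c; 1, 0] := by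
  have hleft : !![a, b; c, 0] = !![1, 0; 0, c] * !![a, b; 1, 0] := by simp
  have hright : !![a, b * c; 1, 0] = !![a, b; 1, 0] * !![1, 0; 0, c] := by simp
  rw [hleft, hright]
  exact hasGDrazin_mul_comm

theorem stmt17_general {A : Type*} [NormedRing A] [NormedAlgebra ℂ A] [CompleteSpace A]
    {a b c : A} (ha : HasGDrazin a) (habc : Commute a (b * c)) :
    HasGDrazin (!![a, b; c, 0] : Matrix (Fin 2) (Fin 2) A) ↔ HasGDrazin (b * c) := by
  rw [hasGDrazin_fin_two_iff_companion, hasGDrazin_companion_iff habc ha]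

theorem stmt17 {A : Type*} [NormedRing A] [NormedAlgebra ℂ A] [CompleteSpace A]
    (a b c ad : A) (h1 : a * ad = ad * a) (h2 : ad = ad * a * ad)
    (h3 : Quasinilpotent (a - a ^ 2 * ad))
    (hbc : (1 - a * ad) * (b * c) = 0) (hcm : a * (b * c) = (b * c) * a) :
    HasGDrazin (!![a, b; c, 0] : Matrix (Fin 2) (Fin 2) A) ↔ HasGDrazin (b * c) :=
  stmt17_general ⟨ad, h1, h2, h3⟩ hcm
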